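/- Let d ≥ 2, κ > 0, and let T₁, T₂ ⊂ ℝ^d be nondegenerate d-simplices with disjoint interiors sharing a common face F = T₁ ∩ T₂, each with shape parameter at most μ; set h := max{diam T₁, diam T₂} and ω_F := int(T₁ ∪ T₂). There exist constants c, C > 0 depending only on d and μ such that for every affine function j : ℝ^d → ℝ: c · min{h, κ^{−1}}^{1/2} · ‖j‖_{L²(F)} ≤ sup{ ∫_F j φ dH^{d−1} : φ ∈ T(ω_F), ‖φ‖_{E,ω_F} ≤ 1 } ≤ C · min{h, κ^{−1}}^{1/2} · ‖j‖_{L²(F)}. -/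

import Mathlib

open MeasureTheory Metric Set
open scoped ENNReal RealInnerProductSpace NNReal Classical

noncomputable section

abbrev Euc (d : ℕ) : Type := EuclideanSpace ℝ (Fin d)

/-- `T(ω)`: Lipschitz functions on `ℝ^d` vanishing identically outside `ω`. -/
def IsTest {d : ℕ} (ω : Set (Euc d)) (φ : Euc d → ℝ) : Prop :=
  (∃ L : ℝ≥0, LipschitzWith L φ) ∧ ∀ x ∉ ω, φ x = 0

/-- `∫_ω |∇φ|²`. -/
def gradSq {d : ℕ} (ω : Set (Euc d)) (φ : Euc d → ℝ) : ℝ :=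
  ∫ x in ω, ‖gradient φ x‖ ^ 2

/-- `∫_ω φ²`. -/
def sqIntg {d : ℕ} (ω : Set (Euc d)) (φ : Euc d → ℝ) : ℝ :=
  ∫ x in ω, (φ x) ^ 2

/-- squared energy norm `‖φ‖_{E,ω}² = ∫_ω |∇φ|² + κ² ∫_ω φ²`. -/
def energySq {d : ℕ} (κ : ℝ) (ω : Set (Euc d)) (φ : Euc d → ℝ) : ℝ :=
  gradSq ω φ + κ ^ 2 * sqIntg ω φ

/-- local dual norm `‖Λ‖_{*,ω} = sup {Λφ : φ ∈ T(ω), ‖φ‖_{E,ω} ≤ 1}`. -/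
def dualNorm {d : ℕ} (κ : ℝ) (ω : Set (Euc d)) (Λ : (Euc d → ℝ) → ℝ) : ℝ≥0∞ :=
  ⨆ φ ∈ {φ : Euc d → ℝ | IsTest ω φ ∧ energySq κ ω φ ≤ 1}, ENNReal.ofReal (Λ φ)

/-- inradius: supremum of radii of balls contained in `s`. -/
def inradius {d : ℕ} (s : Set (Euc d)) : ℝ :=
  sSup {r : ℝ | ∃ c, Metric.ball c r ⊆ s}

/-- the simplex spanned by an affine basis. -/
def simT {d : ℕ} (B : AffineBasis (Fin (d+1)) ℝ (Euc d)) : Set (Euc d) :=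
  convexHull ℝ (Set.range ⇑B)

/-- the face of the simplex opposite to the vertex `z`. -/
def simFace {d : ℕ} (B : AffineBasis (Fin (d+1)) ℝ (Euc d)) (z : Fin (d+1)) : Set (Euc d) :=
  convexHull ℝ (⇑B '' {y | y ≠ z})

/-- the standard `d`-simplex. -/
def Δstd (d : ℕ) : Set (Euc d) := {x | (∀ i, 0 ≤ x i) ∧ ∑ i, x i ≤ 1}

/-- the element bubble of the standard simplex. -/
def elemBubble (d : ℕ) (x : Euc d) : ℝ := (1 - ∑ i, x i) * ∏ i, x i


lemma mem_simT {d : ℕ} (B : AffineBasis (Fin (d+1)) ℝ (Euc d)) (x : Euc d) :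
    x ∈ simT B ↔ ∀ i, 0 ≤ B.coord i x := by
  unfold simT
  rw [B.convexHull_eq_nonneg_coord]
  rfl

lemma mem_int_simT {d : ℕ} (B : AffineBasis (Fin (d+1)) ℝ (Euc d)) (x : Euc d) :
    x ∈ interior (simT B) ↔ ∀ i, 0 < B.coord i x := by
  unfold simT
  rw [B.interior_convexHull]
  rfl

lemma mem_simFace {d : ℕ} (B : AffineBasis (Fin (d+1)) ℝ (Euc d)) (z : Fin (d+1)) (x : Euc d) :
    x ∈ simFace B z ↔ (∀ i, 0 ≤ B.coord i x) ∧ B.coord z x = 0 := by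
  constructor
  · intro hx
    have h1 : simFace B z ⊆ {x | (∀ i, 0 ≤ B.coord i x) ∧ B.coord z x = 0} := by
      apply convexHull_min
      · rintro _ ⟨y, hy, rfl⟩
        refine ⟨fun i => ?_, ?_⟩
        · rw [B.coord_apply]; split_ifs <;> norm_num
        · rw [B.coord_apply]; rw [if_neg]; exact fun h => hy h.symm
      · intro x hx y hy a b ha hb hab
        have key : ∀ i, B.coord i (a • x + b • y) = a * B.coord i x + b * B.coord i y := by
          intro i
          have := Convex.combo_affine_apply (f := B.coord i) (x := x) (y := y) hab
          simpa using this
        refine ⟨fun i => ?_, ?_⟩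
        · rw [key]
          have := hx.1 i; have := hy.1 i; positivity
        · rw [key, hx.2, hy.2]; simp
    exact h1 hx
  · rintro ⟨h0, hz⟩
    have h1 : ∑ i, B.coord i x = 1 := B.sum_coord_apply_eq_one x
    have h2 : ∑ i, B.coord i x • B i = x := B.linear_combination_coord_eq_self x
    have h3 : ∑ i ∈ Finset.univ.erase z, B.coord i x = 1 := by
      rw [← h1, ← Finset.add_sum_erase _ _ (Finset.mem_univ z), hz, zero_add]
    have h4 : ∑ i ∈ Finset.univ.erase z, B.coord i x • B i = x := by
      conv_rhs => rw [← h2]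
      rw [← Finset.add_sum_erase _ _ (Finset.mem_univ z), hz, zero_smul, zero_add]
    rw [← h4]
    apply (convex_convexHull ℝ _).sum_mem (fun i _ => h0 i) h3
    intro i hi
    apply subset_convexHull
    exact ⟨i, (Finset.mem_erase.1 hi).1, rfl⟩

lemma simFace_extreme {d : ℕ} (B : AffineBasis (Fin (d+1)) ℝ (Euc d)) (z : Fin (d+1)) :
    (simFace B z).extremePoints ℝ = B '' {y | y ≠ z} := by
  apply Subset.antisymm extremePoints_convexHull_subset
  rintro _ ⟨i, hi, rfl⟩
  refine ⟨subset_convexHull _ _ ⟨i, hi, rfl⟩, ?_⟩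
  intro x hx y hy hxy
  obtain ⟨a, b, ha, hb, hab, hc⟩ := hxy
  have hx' := ((mem_simFace B z x).1 hx).1
  have hy' := ((mem_simFace B z y).1 hy).1
  have key : ∀ k, B.coord k (B i) = a * B.coord k x + b * B.coord k y := by
    intro k
    rw [← hc]
    have := Convex.combo_affine_apply (f := B.coord k) (x := x) (y := y) hab
    simpa using this
  have hzero : ∀ k, k ≠ i → B.coord k x = 0 := by
    intro k hk
    have h1 := key k
    rw [B.coord_apply, if_neg hk] at h1
    have h2 := hx' k
    have h3 := hy' k
    have h4 := mul_nonneg ha.le h2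
    have h5 := mul_nonneg hb.le h3
    have : a * B.coord k x = 0 := by linarith
    rcases mul_eq_zero.1 this with h | h
    · exact absurd h ha.ne'
    · exact h
  have h1 : ∑ k, B.coord k x • B k = x := B.linear_combination_coord_eq_self x
  have h2 : ∑ k, B.coord k x = 1 := B.sum_coord_apply_eq_one x
  rw [Finset.sum_eq_single i (fun k _ hk => hzero k hk) (by simp)] at h2
  rw [Finset.sum_eq_single i (fun k _ hk => by rw [hzero k hk, zero_smul]) (by simp), h2, one_smul] at h1
  exact h1.symm

lemma simT_compact {d : ℕ} (B : AffineBasis (Fin (d+1)) ℝ (Euc d)) : IsCompact (simT B) :=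
  (Set.finite_range B).isCompact_convexHull ℝ

lemma diam_pos_simT {d : ℕ} (hd : 1 ≤ d) (B : AffineBasis (Fin (d+1)) ℝ (Euc d)) :
    0 < Metric.diam (simT B) := by
  have h01 : (0 : Fin (d+1)) ≠ Fin.last d := by
    intro h; have := congrArg Fin.val h; simp at this; omega
  have h : B 0 ≠ B (Fin.last d) := fun h => h01 (B.ind.injective h)
  have h2 := Metric.dist_le_diam_of_mem (simT_compact B).isBounded
    (subset_convexHull ℝ _ ⟨0, rfl⟩ : B 0 ∈ simT B)
    (subset_convexHull ℝ _ ⟨Fin.last d, rfl⟩ : B (Fin.last d) ∈ simT B)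
  exact lt_of_lt_of_le (dist_pos.2 h) h2

lemma shape_ball {d : ℕ} (hd : 1 ≤ d) (μ : ℝ) (B : AffineBasis (Fin (d+1)) ℝ (Euc d))
    (h : Metric.diam (simT B) ≤ μ * inradius (simT B)) :
    ∃ r > 0, Metric.diam (simT B) ≤ 2 * max μ 1 * r ∧
      ∀ i x y, |B.coord i x - B.coord i y| ≤ 2 * ‖x - y‖ / r := by
  have hD := diam_pos_simT hd B
  have hin0 : 0 ≤ inradius (simT B) := by
    unfold inradius
    by_cases hb : BddAbove {r : ℝ | ∃ c, Metric.ball c r ⊆ simT B}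
    · exact le_csSup hb ⟨0, by simp⟩
    · rw [Real.sSup_of_not_bddAbove hb]
  have hin : 0 < inradius (simT B) := by
    rcases hin0.lt_or_eq with h' | h'
    · exact h'
    · rw [← h'] at h; linarith
  obtain ⟨r, ⟨c, hc⟩, hr⟩ := exists_lt_of_lt_csSup (s := {r : ℝ | ∃ c, Metric.ball c r ⊆ simT B})
    ⟨0, 0, by simp⟩ (show inradius (simT B) / 2 < sSup _ by unfold inradius at *; linarith)
  have hr0 : 0 < r := by linarith
  refine ⟨r, hr0, ?_, ?_⟩
  · have h1 : μ * inradius (simT B) ≤ max μ 1 * inradius (simT B) :=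
      mul_le_mul_of_nonneg_right (le_max_left _ _) hin.le
    have h2 : (1:ℝ) ≤ max μ 1 := le_max_right _ _
    nlinarith
  · intro i x y
    have h01 : ∀ p ∈ simT B, 0 ≤ B.coord i p ∧ B.coord i p ≤ 1 := by
      intro p hp
      rw [mem_simT] at hp
      refine ⟨hp i, ?_⟩
      rw [← B.sum_coord_apply_eq_one p]
      exact Finset.single_le_sum (fun k _ => hp k) (Finset.mem_univ i)
    have hl : ∀ u : Euc d, ‖u‖ < r → |(B.coord i).linear u| ≤ 1 := by
      intro u hu
      have e : (B.coord i).linear u = B.coord i (u + c) - B.coord i c := by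
        have := (B.coord i).map_vadd c u
        simp only [vadd_eq_add] at this
        rw [this]; ring
      have a1 := h01 _ (hc (by simpa using hu : u + c ∈ ball c r))
      have a2 := h01 _ (hc (mem_ball_self hr0))
      rw [e, abs_le]; constructor <;> linarith [a1.1, a1.2, a2.1, a2.2]
    have e : B.coord i x - B.coord i y = (B.coord i).linear (x - y) := by
      have := (B.coord i).linearMap_vsub x y
      simpa using this.symm
    rw [e]
    set u := x - y
    by_cases hu : u = 0
    · simp [hu]
    have hu' : 0 < ‖u‖ := norm_pos_iff.2 hu
    have h3 := hl ((r / 2 / ‖u‖) • u) (by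
      rw [norm_smul, Real.norm_of_nonneg (by positivity), div_mul_cancel₀ _ hu'.ne']; linarith)
    rw [map_smul, smul_eq_mul, abs_mul, abs_of_nonneg (by positivity)] at h3
    rw [le_div_iff₀ hr0]
    have h4 : r / 2 / ‖u‖ * |(B.coord i).linear u| = (|(B.coord i).linear u| * r) / (2 * ‖u‖) := by
      field_simp
    rw [h4, div_le_one (by positivity)] at h3
    exact h3


def fcen {d : ℕ} (S : Set (Euc d)) : Euc d := ((d:ℝ)⁻¹) • ∑ᶠ p ∈ S, p

lemma coord_fcen {d : ℕ} (hd : 2 ≤ d) (B : AffineBasis (Fin (d+1)) ℝ (Euc d)) (z i : Fin (d+1)) :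
    B.coord i (fcen (B '' {y | y ≠ z})) = if i = z then 0 else (d:ℝ)⁻¹ := by
  have hd0 : (d:ℝ) ≠ 0 := by positivity
  set w : Fin (d+1) → ℝ := fun i => if i = z then 0 else (d:ℝ)⁻¹ with hw
  have hset : {y : Fin (d+1) | y ≠ z} = ↑(Finset.univ.erase z) := by ext; simp
  have hw1 : ∑ i, w i = 1 := by
    rw [← Finset.add_sum_erase _ _ (Finset.mem_univ z)]
    have : ∑ x ∈ Finset.univ.erase z, w x = ∑ x ∈ Finset.univ.erase z, (d:ℝ)⁻¹ :=
      Finset.sum_congr rfl (fun x hx => by simp [hw, (Finset.mem_erase.1 hx).1])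
    rw [this]
    simp [hw, Finset.card_erase_of_mem, hd0]
  have e : fcen (B '' {y | y ≠ z}) = Finset.univ.affineCombination ℝ B w := by
    rw [Finset.affineCombination_eq_linear_combination _ _ _ hw1]
    unfold fcen
    rw [finsum_mem_image B.ind.injective.injOn, hset, finsum_mem_coe_finset, Finset.smul_sum]
    rw [← Finset.add_sum_erase _ (fun i => w i • B i) (Finset.mem_univ z)]
    simp only [hw, if_true, zero_smul, zero_add]
    exact Finset.sum_congr rfl (fun x hx => by simp [(Finset.mem_erase.1 hx).1])
  rw [e, B.coord_apply_combination_of_mem (Finset.mem_univ i) hw1]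

lemma ball_coord_pos {d : ℕ} (hd : 2 ≤ d) (B : AffineBasis (Fin (d+1)) ℝ (Euc d)) (z : Fin (d+1))
    (r : ℝ) (hr : 0 < r) (hL : ∀ i x y, |B.coord i x - B.coord i y| ≤ 2 * ‖x - y‖ / r)
    (x : Euc d) (hx : x ∈ ball (fcen (B '' {y | y ≠ z})) (r / (2 * d))) (i : Fin (d+1)) (hi : i ≠ z) :
    0 < B.coord i x := by
  have hd0 : (0:ℝ) < d := by positivity
  have h1 := hL i x (fcen (B '' {y | y ≠ z}))
  rw [coord_fcen hd, if_neg hi] at h1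
  rw [mem_ball, dist_eq_norm, lt_div_iff₀ (by positivity)] at hx
  have h2 : 2 * ‖x - fcen (B '' {y | y ≠ z})‖ / r < (d:ℝ)⁻¹ := by
    rw [div_lt_iff₀ hr, inv_mul_eq_div, lt_div_iff₀ hd0]; linarith
  have := (abs_le.1 h1).1
  linarith

lemma fcen_mem {d : ℕ} (hd : 2 ≤ d) (B : AffineBasis (Fin (d+1)) ℝ (Euc d)) (z : Fin (d+1)) :
    fcen (B '' {y | y ≠ z}) ∈ simFace B z := by
  rw [mem_simFace]
  refine ⟨fun i => ?_, by rw [coord_fcen hd]; simp⟩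
  rw [coord_fcen hd]; split_ifs <;> positivity

/-- relative ball inside the face gives a lower bound for the diameter of the neighbour -/
lemma diam_lower {d : ℕ} (hd : 2 ≤ d) (B : AffineBasis (Fin (d+1)) ℝ (Euc d)) (z : Fin (d+1))
    (r : ℝ) (hr : 0 < r) (hL : ∀ i x y, |B.coord i x - B.coord i y| ≤ 2 * ‖x - y‖ / r)
    (S : Set (Euc d)) (hS : Bornology.IsBounded S) (hF : simFace B z ⊆ S) :
    r / (4 * d) ≤ Metric.diam S := by
  have hd0 : (0:ℝ) < d := by positivity
  obtain ⟨i, hi⟩ : ∃ i, i ≠ z := by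
    have : Nontrivial (Fin (d+1)) := Fin.nontrivial_iff_two_le.2 (by omega)
    exact exists_ne z
  set x0 := fcen (B '' {y | y ≠ z}) with hx0
  have hne : B i - x0 ≠ 0 := by
    intro h
    have h1 : B i = x0 := sub_eq_zero.1 h
    have h2 : B.coord i (B i) = B.coord i x0 := by rw [h1]
    rw [coord_fcen hd, if_neg hi, B.coord_apply_eq] at h2
    have h3 : (d:ℝ) = 1 := by field_simp at h2; linarith
    have : d = 1 := by exact_mod_cast h3
    omega
  have hn : 0 < ‖B i - x0‖ := norm_pos_iff.2 hne
  set t := r / (4 * d) / ‖B i - x0‖ with ht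
  have ht0 : 0 < t := by positivity
  set y := AffineMap.lineMap x0 (B i) t with hy
  have hyv : y - x0 = t • (B i - x0) := by simp [hy, AffineMap.lineMap_apply]
  have hnorm : ‖y - x0‖ = r / (4 * d) := by
    rw [hyv, norm_smul, Real.norm_of_nonneg ht0.le, ht, div_mul_cancel₀ _ hn.ne']
  have hyball : y ∈ ball x0 (r / (2 * d)) := by
    rw [mem_ball, dist_eq_norm, hnorm]
    apply div_lt_div_of_pos_left hr (by positivity); linarith
  have hz : B.coord z y = 0 := by
    rw [hy, AffineMap.apply_lineMap, coord_fcen hd, B.coord_apply, if_neg hi.symm]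
    simp
  have hyF : y ∈ simFace B z := by
    rw [mem_simFace]
    refine ⟨fun k => ?_, hz⟩
    by_cases hk : k = z
    · rw [hk, hz]
    · exact (ball_coord_pos hd B z r hr hL y hyball k hk).le
  have := Metric.dist_le_diam_of_mem hS (hF hyF) (hF (fcen_mem hd B z))
  rw [dist_eq_norm] at this
  rw [← hnorm]; exact this

lemma geom (d : ℕ) (hd : 2 ≤ d) (μ : ℝ) :
    ∃ q : ℝ, 0 < q ∧ q ≤ 1 ∧ ∀ B₁ B₂ : AffineBasis (Fin (d + 1)) ℝ (Euc d),
        interior (simT B₁) ∩ interior (simT B₂) = ∅ →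
        Metric.diam (simT B₁) ≤ μ * inradius (simT B₁) →
        Metric.diam (simT B₂) ≤ μ * inradius (simT B₂) →
        ∀ z₁ z₂ : Fin (d + 1),
          simT B₁ ∩ simT B₂ = simFace B₁ z₁ →
          simT B₁ ∩ simT B₂ = simFace B₂ z₂ →
        ∃ x0 n : Euc d, ‖n‖ = 1 ∧ x0 ∈ simT B₁ ∩ simT B₂ ∧
          (∀ x ∈ simT B₁ ∩ simT B₂, ⟪n, x - x0⟫ = 0) ∧
          (∀ x ∈ ball x0 (q * max (Metric.diam (simT B₁)) (Metric.diam (simT B₂))),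
            ⟪n, x - x0⟫ = 0 → x ∈ simT B₁ ∩ simT B₂) ∧
          ball x0 (q * max (Metric.diam (simT B₁)) (Metric.diam (simT B₂)))
            ⊆ simT B₁ ∪ simT B₂ := by
  have hd0 : (0:ℝ) < d := by positivity
  have hd1 : (1:ℝ) ≤ d := by exact_mod_cast (by omega : 1 ≤ d)
  set M := max μ 1 with hM
  have hM1 : 1 ≤ M := le_max_right _ _
  set s : ℝ := 1 / (8 * M * d) with hs
  have hs0 : 0 < s := by positivity
  have hs1 : s ≤ 1 := by
    rw [hs, div_le_one (by positivity)]; nlinarith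
  refine ⟨s ^ 2, by positivity, by nlinarith, ?_⟩
  intro B₁ B₂ hint h1 h2 z₁ z₂ hz1 hz2
  obtain ⟨r₁, hr₁, hD₁, hL₁⟩ := shape_ball (by omega) μ B₁ h1
  obtain ⟨r₂, hr₂, hD₂, hL₂⟩ := shape_ball (by omega) μ B₂ h2
  have hV : B₁ '' {y | y ≠ z₁} = B₂ '' {y | y ≠ z₂} := by
    rw [← simFace_extreme, ← simFace_extreme, ← hz1, ← hz2]
  have hd21 := diam_lower hd B₁ z₁ r₁ hr₁ hL₁ (simT B₂) (simT_compact B₂).isBounded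
    (by rw [← hz1]; exact inter_subset_right)
  have hd12 := diam_lower hd B₂ z₂ r₂ hr₂ hL₂ (simT B₁) (simT_compact B₁).isBounded
    (by rw [← hz2]; exact inter_subset_left)
  set D₁ := Metric.diam (simT B₁)
  set D₂ := Metric.diam (simT B₂)
  have hD₁0 : 0 < D₁ := diam_pos_simT (by omega) B₁
  have hD₂0 : 0 < D₂ := diam_pos_simT (by omega) B₂
  have hr1' : s * D₁ ≤ r₁ / (4 * d) := by
    rw [hs, div_mul_eq_mul_div, one_mul, div_le_div_iff₀ (by positivity) (by positivity)]
    nlinarith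
  have hr2' : s * D₂ ≤ r₂ / (4 * d) := by
    rw [hs, div_mul_eq_mul_div, one_mul, div_le_div_iff₀ (by positivity) (by positivity)]
    nlinarith
  have hlt : ∀ r : ℝ, 0 < r → r / (4 * d) ≤ r / (2 * d) := by
    intro r hr
    apply div_le_div_of_nonneg_left hr.le (by positivity); linarith
  have hmax1 : s * max D₁ D₂ ≤ D₁ := by
    rcases max_cases D₁ D₂ with h | h <;> rw [h.1] <;> nlinarith
  have hmax2 : s * max D₁ D₂ ≤ D₂ := by
    rcases max_cases D₁ D₂ with h | h <;> rw [h.1] <;> nlinarith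
  have hq1 : s ^ 2 * max D₁ D₂ ≤ r₁ / (2 * d) := by
    have := hlt r₁ hr₁; nlinarith
  have hq2 : s ^ 2 * max D₁ D₂ ≤ r₂ / (2 * d) := by
    have := hlt r₂ hr₂; nlinarith
  set x0 := fcen (B₁ '' {y | y ≠ z₁}) with hx0
  have hx0' : x0 = fcen (B₂ '' {y | y ≠ z₂}) := by rw [hx0, hV]
  have hx0F : x0 ∈ simT B₁ ∩ simT B₂ := by rw [hz1]; exact fcen_mem hd B₁ z₁
  have hc1 : ∀ x ∈ ball x0 (s ^ 2 * max D₁ D₂), ∀ i ≠ z₁, 0 < B₁.coord i x := fun x hx i hi =>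
    ball_coord_pos hd B₁ z₁ r₁ hr₁ hL₁ x (ball_subset_ball hq1 hx) i hi
  have hc2 : ∀ x ∈ ball x0 (s ^ 2 * max D₁ D₂), ∀ i ≠ z₂, 0 < B₂.coord i x := fun x hx i hi =>
    ball_coord_pos hd B₂ z₂ r₂ hr₂ hL₂ x (by rw [← hx0']; exact ball_subset_ball hq2 hx) i hi
  have h01 : B₁.coord z₁ x0 = 0 := by rw [coord_fcen hd]; simp
  have h02 : B₂.coord z₂ x0 = 0 := by rw [hx0', coord_fcen hd]; simp
  set g : Euc d := (InnerProductSpace.toDual ℝ (Euc d)).symm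
    (LinearMap.toContinuousLinearMap (B₁.coord z₁).linear) with hg
  have hgi : ∀ x, ⟪g, x - x0⟫ = B₁.coord z₁ x := by
    intro x
    rw [hg, InnerProductSpace.toDual_symm_apply]
    have := (B₁.coord z₁).linearMap_vsub x x0
    simp only [vsub_eq_sub, h01, sub_zero] at this
    simpa using this
  have hg0 : g ≠ 0 := by
    intro h
    have := hgi (B₁ z₁)
    rw [h, inner_zero_left, B₁.coord_apply_eq] at this
    norm_num at this
  have hgn : 0 < ‖g‖ := norm_pos_iff.2 hg0
  have hni : ∀ x, ⟪(‖g‖⁻¹ • g), x - x0⟫ = ‖g‖⁻¹ * B₁.coord z₁ x := by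
    intro x
    rw [real_inner_smul_left, hgi]
  refine ⟨x0, ‖g‖⁻¹ • g, ?_, hx0F, ?_, ?_, ?_⟩
  · rw [norm_smul, norm_inv, norm_norm, inv_mul_cancel₀ hgn.ne']
  · intro x hx
    rw [hz1, mem_simFace] at hx
    rw [hni, hx.2, mul_zero]
  · intro x hx h
    rw [hni] at h
    have h' : B₁.coord z₁ x = 0 := by
      rcases mul_eq_zero.1 h with h | h
      · exact absurd h (inv_ne_zero hgn.ne')
      · exact h
    rw [hz1, mem_simFace]
    refine ⟨fun i => ?_, h'⟩
    by_cases hi : i = z₁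
    · rw [hi, h']
    · exact (hc1 x hx i hi).le
  · intro x hx
    by_contra hcon
    rw [mem_union, not_or, mem_simT, mem_simT] at hcon
    obtain ⟨hn1, hn2⟩ := hcon
    have hz1n : B₁.coord z₁ x < 0 := by
      by_contra hh
      apply hn1
      intro i
      by_cases hi : i = z₁
      · rw [hi]; linarith
      · exact (hc1 x hx i hi).le
    have hz2n : B₂.coord z₂ x < 0 := by
      by_contra hh
      apply hn2
      intro i
      by_cases hi : i = z₂
      · rw [hi]; linarith
      · exact (hc2 x hx i hi).le
    set y := AffineMap.lineMap x0 x (-1 : ℝ) with hy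
    have hyb : y ∈ ball x0 (s ^ 2 * max D₁ D₂) := by
      rw [mem_ball, hy, dist_lineMap_left]
      rw [mem_ball, dist_comm] at hx
      simpa using hx
    have e1 : B₁.coord z₁ y = - B₁.coord z₁ x := by
      rw [hy, AffineMap.apply_lineMap, h01]; simp [AffineMap.lineMap_apply]
    have e2 : B₂.coord z₂ y = - B₂.coord z₂ x := by
      rw [hy, AffineMap.apply_lineMap, h02]; simp [AffineMap.lineMap_apply]
    have : y ∈ interior (simT B₁) ∩ interior (simT B₂) := by
      rw [mem_inter_iff, mem_int_simT, mem_int_simT]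
      constructor
      · intro i
        by_cases hi : i = z₁
        · rw [hi, e1]; linarith
        · exact hc1 y hyb i hi
      · intro i
        by_cases hi : i = z₂
        · rw [hi, e2]; linarith
        · exact hc2 y hyb i hi
    rw [hint] at this
    exact this


lemma exists_param (m : ℕ) (n : Euc (m+1)) (hn : ‖n‖ = 1) :
    ∃ L : Euc m →ₗᵢ[ℝ] Euc (m+1), (∀ y, ⟪n, L y⟫ = 0) ∧ (∀ x, ∃ y, x = L y + ⟪n, x⟫ • n) ∧
      MeasurePreserving (fun p : Euc m × ℝ => L p.1 + p.2 • n) ∧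
      MeasurableEmbedding (fun p : Euc m × ℝ => L p.1 + p.2 • n) := by
  have hn0 : n ≠ 0 := by intro h; simp [h] at hn
  have : Fact (Module.finrank ℝ (Euc (m+1)) = m + 1) := ⟨by simp⟩
  let b := OrthonormalBasis.fromOrthogonalSpanSingleton (𝕜 := ℝ) m hn0
  let L : Euc m →ₗᵢ[ℝ] Euc (m+1) := (Submodule.subtypeₗᵢ _).comp b.repr.symm.toLinearIsometry
  have hL : ∀ y, ⟪n, L y⟫ = 0 := by
    intro y
    exact Submodule.mem_orthogonal_singleton_iff_inner_right.1 (b.repr.symm y).2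
  let Φ0 : WithLp 2 (Euc m × ℝ) →ₗ[ℝ] Euc (m+1) :=
    { toFun := fun p => L p.fst + p.snd • n
      map_add' := by intro p q; simp [add_smul]; abel
      map_smul' := by intro c p; simp [smul_smul] }
  let Φ1 : WithLp 2 (Euc m × ℝ) →ₗᵢ[ℝ] Euc (m+1) :=
    { Φ0 with
      norm_map' := by
        intro p
        change ‖L p.fst + p.snd • n‖ = ‖p‖
        have h1 := norm_add_sq_real (L p.fst) (p.snd • n)
        rw [real_inner_smul_right, real_inner_comm, hL, norm_smul, hn, L.norm_map] at h1
        have h2 := WithLp.prod_norm_sq_eq_of_L2 p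
        have : ‖L p.fst + p.snd • n‖^2 = ‖p‖^2 := by rw [h1, h2]; ring
        exact (sq_eq_sq₀ (norm_nonneg _) (norm_nonneg _)).1 this }
  let e : WithLp 2 (Euc m × ℝ) ≃ₗᵢ[ℝ] Euc (m+1) :=
    LinearIsometry.toLinearIsometryEquiv Φ1 (by
      rw [(WithLp.linearEquiv 2 ℝ (Euc m × ℝ)).finrank_eq]; simp)
  have he : ∀ p, e p = L p.fst + p.snd • n := fun p => rfl
  refine ⟨L, hL, ?_, ?_, ?_⟩
  · intro x
    obtain ⟨p, hp⟩ := e.surjective x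
    rw [he] at hp
    refine ⟨p.fst, ?_⟩
    have : ⟪n, x⟫ = p.snd := by
      rw [← hp, inner_add_right, hL, real_inner_smul_right, real_inner_self_eq_norm_sq, hn]; simp
    rw [this, hp]
  · exact e.measurePreserving.comp (WithLp.volume_preserving_toLp (Euc m) ℝ)
  · exact e.toHomeomorph.measurableEmbedding.comp (MeasurableEquiv.toLp 2 (Euc m × ℝ)).measurableEmbedding

lemma exists_alpha (m : ℕ) : ∃ α : ℝ≥0, 0 < α ∧ (μH[(m:ℝ)] : Measure (Euc m)) = α • volume := by
  have hf : (Module.finrank ℝ (Euc m)) = m := by simp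
  have : (μH[(m:ℝ)] : Measure (Euc m)).IsAddHaarMeasure := by
    have := MeasureTheory.isAddHaarMeasure_hausdorffMeasure (E := Euc m)
    rwa [hf] at this
  have h := Measure.isAddLeftInvariant_eq_smul (μH[(m:ℝ)] : Measure (Euc m)) volume
  refine ⟨_, ?_, h⟩
  exact Measure.addHaarScalarFactor_pos_of_isAddHaarMeasure _ _

lemma face_integral (m : ℕ) (α : ℝ≥0) (hα : (μH[(m:ℝ)] : Measure (Euc m)) = α • volume)
    (n x0 : Euc (m+1)) (L : Euc m →ₗᵢ[ℝ] Euc (m+1))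
    (hs : ∀ x, ∃ y, x = L y + ⟪n, x⟫ • n)
    (F : Set (Euc (m+1))) (hF : MeasurableSet F) (hFn : ∀ x ∈ F, ⟪n, x - x0⟫ = 0)
    (f : Euc (m+1) → ℝ) :
    ∫ x in F, f x ∂(μH[(m:ℝ)]) = α * ∫ y in {y | x0 + L y ∈ F}, f (x0 + L y) := by
  have hiso : Isometry (fun y => x0 + L y) := (IsometryEquiv.addLeft x0).isometry.comp L.isometry
  have hmap := hiso.map_hausdorffMeasure (d := (m:ℝ)) (Or.inl (by positivity))
  have hr : F ⊆ range (fun y => x0 + L y) := by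
    intro x hx
    obtain ⟨y, hy⟩ := hs (x - x0)
    rw [hFn x hx, zero_smul, add_zero] at hy
    exact ⟨y, by simp [← hy]⟩
  have h1 : (μH[(m:ℝ)] : Measure (Euc (m+1))).restrict F
      = (Measure.map (fun y => x0 + L y) μH[(m:ℝ)]).restrict F := by
    rw [hmap, Measure.restrict_restrict hF, inter_eq_left.2 hr]
  rw [h1, hiso.isClosedEmbedding.measurableEmbedding.setIntegral_map, hα,
    Measure.restrict_smul, integral_smul_nnreal_measure]
  rfl

lemma one_d (f : ℝ → ℝ) (K : ℝ≥0) (hf : LipschitzWith K f) (h : ℝ) (hh : 0 < h) (hfh : f h = 0)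
    (κ : ℝ) (hκ : 0 < κ) :
    f 0 ^ 2 ≤ min h κ⁻¹ * ∫ t in (0:ℝ)..h, ((deriv f t) ^ 2 + κ ^ 2 * f t ^ 2) := by
  have hac : AbsolutelyContinuousOnInterval f 0 h :=
    (hf.lipschitzOnWith (s := uIcc 0 h)).absolutelyContinuousOnInterval
  have hb : ∀ t, ‖deriv f t‖ ≤ K := fun t => norm_deriv_le_of_lipschitz hf
  have hm : Measurable (deriv f) := measurable_deriv f
  have hi1 : IntervalIntegrable (deriv f) volume 0 h := hac.intervalIntegrable_deriv
  have hi2 : IntervalIntegrable (fun t => deriv f t ^ 2) volume 0 h := by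
    rw [intervalIntegrable_iff_integrableOn_Ioc_of_le hh.le]
    apply Measure.integrableOn_of_bounded (M := (K:ℝ)^2) (by simp) (hm.pow_const 2).aestronglyMeasurable
    filter_upwards with t
    rw [norm_pow]
    exact pow_le_pow_left₀ (norm_nonneg _) (hb t) 2
  have hcf := hf.continuous
  have hi3 : IntervalIntegrable (fun t => κ ^ 2 * f t ^ 2) volume 0 h :=
    (by fun_prop : Continuous (fun t => κ ^ 2 * f t ^ 2)).intervalIntegrable _ _
  have hi4 : IntervalIntegrable (fun t => f t * deriv f t) volume 0 h :=
    hi1.continuousOn_mul hcf.continuousOn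
  have h1 : ∫ t in (0:ℝ)..h, deriv f t = - f 0 := by
    rw [hac.integral_deriv_eq_sub, hfh]; ring
  have h2 : ∫ t in (0:ℝ)..h, f t * deriv f t = - f 0 ^ 2 / 2 := by
    have := hac.integral_deriv_mul_eq_sub hac
    have e : ∫ t in (0:ℝ)..h, (deriv f t * f t + f t * deriv f t)
        = 2 * ∫ t in (0:ℝ)..h, f t * deriv f t := by
      rw [← intervalIntegral.integral_const_mul]
      congr 1; ext t; ring
    rw [e, hfh] at this
    linarith
  rw [intervalIntegral.integral_add hi2 hi3]
  set I2 := ∫ t in (0:ℝ)..h, deriv f t ^ 2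
  set I3 := ∫ t in (0:ℝ)..h, κ ^ 2 * f t ^ 2 with hI3
  have hI3n : 0 ≤ I3 := intervalIntegral.integral_nonneg hh.le (fun t _ => by positivity)
  have a1 : f 0 ^ 2 ≤ h * I2 := by
    have p : 0 ≤ ∫ t in (0:ℝ)..h, (deriv f t + f 0 / h) ^ 2 :=
      intervalIntegral.integral_nonneg hh.le (fun t _ => by positivity)
    have e : ∫ t in (0:ℝ)..h, (deriv f t + f 0 / h) ^ 2
        = I2 + (2 * (f 0 / h)) * (- f 0) + h * (f 0 / h) ^ 2 := by
      have e1 : (fun t => (deriv f t + f 0 / h) ^ 2)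
        = fun t => deriv f t ^ 2 + (2 * (f 0 / h)) * deriv f t + (f 0 / h) ^ 2 := by
        ext t; ring
      rw [e1, intervalIntegral.integral_add (hi2.add (hi1.const_mul _)) (by simp),
        intervalIntegral.integral_add hi2 (hi1.const_mul _), intervalIntegral.integral_const_mul, h1]
      simp [I2]
    rw [e] at p
    have e3 : I2 + (2 * (f 0 / h)) * (- f 0) + h * (f 0 / h) ^ 2 = I2 - f 0 ^ 2 / h := by
      field_simp; ring
    rw [e3] at p
    have : f 0 ^ 2 / h ≤ I2 := by linarith
    rw [div_le_iff₀ hh] at this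
    linarith
  have a2 : f 0 ^ 2 ≤ κ⁻¹ * (I2 + I3) := by
    have p : 0 ≤ ∫ t in (0:ℝ)..h, (deriv f t + κ * f t) ^ 2 :=
      intervalIntegral.integral_nonneg hh.le (fun t _ => by positivity)
    have e : ∫ t in (0:ℝ)..h, (deriv f t + κ * f t) ^ 2
        = I2 + (2 * κ) * (- f 0 ^ 2 / 2) + I3 := by
      have e1 : (fun t => (deriv f t + κ * f t) ^ 2)
        = fun t => deriv f t ^ 2 + (2 * κ) * (f t * deriv f t) + κ ^ 2 * f t ^ 2 := by
        ext t; ring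
      rw [e1, intervalIntegral.integral_add (hi2.add (hi4.const_mul _)) hi3,
        intervalIntegral.integral_add hi2 (hi4.const_mul _), intervalIntegral.integral_const_mul, h2]
    rw [e] at p
    rw [inv_mul_eq_div, le_div_iff₀ hκ]
    linarith
  rcases min_cases h κ⁻¹ with hc | hc <;> rw [hc.1]
  · nlinarith
  · exact a2


lemma norm_gradient_eq {d : ℕ} (φ : Euc d → ℝ) (x : Euc d) : ‖gradient φ x‖ = ‖fderiv ℝ φ x‖ := by
  unfold gradient
  exact LinearIsometryEquiv.norm_map _ _

lemma integrable_energy {d : ℕ} (κ : ℝ) (ω : Set (Euc d)) (ho : IsOpen ω)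
    (hb : Bornology.IsBounded ω) (φ : Euc d → ℝ) (hφ : IsTest ω φ) :
    IntegrableOn (fun x => ‖gradient φ x‖ ^ 2) ω ∧ IntegrableOn (fun x => κ ^ 2 * φ x ^ 2) ω := by
  obtain ⟨⟨K, hK⟩, h0⟩ := hφ
  have hvol : volume ω ≠ ∞ := hb.measure_lt_top.ne
  constructor
  · have hm : Measurable (fun x => ‖gradient φ x‖ ^ 2) := by
      simp_rw [norm_gradient_eq]
      exact (measurable_fderiv ℝ φ).norm.pow_const 2
    apply Measure.integrableOn_of_bounded (M := (K:ℝ)^2) hvol hm.aestronglyMeasurable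
    filter_upwards with t
    rw [norm_pow, norm_norm, norm_gradient_eq]
    exact pow_le_pow_left₀ (norm_nonneg _) (norm_fderiv_le_of_lipschitz ℝ hK) 2
  · have hc := hK.continuous
    have : IntegrableOn (fun x => κ ^ 2 * φ x ^ 2) (closure ω) :=
      (by fun_prop : Continuous (fun x => κ ^ 2 * φ x ^ 2)).continuousOn.integrableOn_compact
        hb.isCompact_closure
    exact this.mono_set subset_closure

lemma trace_bound (m : ℕ) (κ : ℝ) (hκ : 0 < κ) (n x0 : Euc (m+1)) (hn : ‖n‖ = 1)
    (L : Euc m →ₗᵢ[ℝ] Euc (m+1))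
    (hP : MeasurePreserving (fun p : Euc m × ℝ => L p.1 + p.2 • n))
    (hPe : MeasurableEmbedding (fun p : Euc m × ℝ => L p.1 + p.2 • n))
    (ω F : Set (Euc (m+1))) (ho : IsOpen ω) (hb : Bornology.IsBounded ω)
    (hfr : volume (frontier ω) = 0) (hF : MeasurableSet F)
    (h : ℝ) (hh : 0 < h) (hFh : ∀ x ∈ F, x + h • n ∉ ω)
    (φ : Euc (m+1) → ℝ) (hφ : IsTest ω φ) :
    ∫ y in {y | x0 + L y ∈ F}, φ (x0 + L y) ^ 2 ≤ min h κ⁻¹ * energySq κ ω φ := by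
  have hint := integrable_energy κ ω ho hb φ hφ
  obtain ⟨⟨K, hK⟩, h0⟩ := hφ
  set P : Euc m × ℝ → Euc (m+1) := fun p => x0 + (L p.1 + p.2 • n) with hPdef
  have hP' : MeasurePreserving P := (measurePreserving_add_left volume x0).comp hP
  have hPe' : MeasurableEmbedding P := (Homeomorph.addLeft x0).measurableEmbedding.comp hPe
  set G : Euc (m+1) → ℝ := ω.indicator (fun x => ‖gradient φ x‖ ^ 2 + κ ^ 2 * φ x ^ 2) with hG
  have hGi : Integrable G := (hint.1.add hint.2).integrable_indicator ho.measurableSet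
  have hGint : ∫ x, G x = energySq κ ω φ := by
    rw [hG, integral_indicator ho.measurableSet, integral_add hint.1 hint.2, integral_const_mul]
    rfl
  have hG0 : ∀ x, 0 ≤ G x := fun x => indicator_nonneg (fun x _ => by positivity) x
  have hGP : Integrable (G ∘ P) (volume.prod volume) := by
    have := (hP'.integrable_comp_emb hPe' (g := G)).2 hGi
    exact this
  have hGPint : ∫ y, ∫ t, G (P (y, t)) = energySq κ ω φ := by
    rw [← hGint, ← hP'.integral_comp hPe', Measure.volume_eq_prod]
    exact (integral_prod _ hGP).symm
  have hmin : 0 ≤ min h κ⁻¹ := le_min hh.le (by positivity)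
  -- a.e. good points
  have hgood : ∀ᵐ x : Euc (m+1), DifferentiableAt ℝ φ x ∧ x ∉ frontier ω := by
    filter_upwards [hK.ae_differentiableAt, measure_eq_zero_iff_ae_notMem.1 hfr] with x h1 h2
    exact ⟨h1, h2⟩
  have hgood2 : ∀ᵐ p : Euc m × ℝ ∂(volume.prod volume), DifferentiableAt ℝ φ (P p) ∧ P p ∉ frontier ω :=
    hP'.quasiMeasurePreserving.ae hgood
  have hgood3 := Measure.ae_ae_of_ae_prod hgood2
  have hfib : ∀ᵐ y : Euc m, Integrable (fun t => G (P (y, t))) := hGP.prod_right_ae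
  rw [← hGPint, ← integral_const_mul]
  have hmeas : MeasurableSet {y | x0 + L y ∈ F} := by
    have : Continuous (fun y => x0 + L y) := by fun_prop
    exact this.measurable hF
  have hRi : Integrable (fun y => min h κ⁻¹ * ∫ t, G (P (y, t))) := hGP.integral_prod_left.const_mul _
  rw [← integral_indicator hmeas]
  apply integral_mono_of_nonneg
  · filter_upwards with y
    exact indicator_nonneg (fun y _ => by positivity) y
  · exact hRi
  filter_upwards [hgood3, hfib] with y hy hyi
  by_cases hyF : x0 + L y ∈ F
  swap
  · rw [indicator_of_notMem (by exact hyF)]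
    exact mul_nonneg hmin (integral_nonneg (fun t => hG0 _))
  rw [indicator_of_mem (by exact hyF)]
  have hPn : ∀ t, HasDerivAt (fun t => P (y, t)) n t := by
    intro t
    have h1 : HasDerivAt (fun t : ℝ => t • n) n t := by
      simpa using (hasDerivAt_id t).smul_const n
    exact (h1.const_add (L y)).const_add x0
  have hlip : LipschitzWith K (fun t => φ (P (y, t))) := by
    have h1 : LipschitzWith 1 (fun t => P (y, t)) := by
      apply LipschitzWith.of_dist_le_mul
      intro s t
      simp only [hPdef, dist_eq_norm, NNReal.coe_one, one_mul]
      have : x0 + (L y + s • n) - (x0 + (L y + t • n)) = (s - t) • n := by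
        rw [sub_smul]; abel
      rw [this, norm_smul, hn, mul_one]
    have h2 := hK.comp h1
    rw [mul_one] at h2
    exact h2
  have hend : φ (P (y, h)) = 0 := by
    apply h0
    have := hFh _ hyF
    rwa [add_assoc] at this
  have key := one_d (fun t => φ (P (y, t))) K hlip h hh hend κ hκ
  have e0 : P (y, 0) = x0 + L y := by simp [hPdef]
  simp only [e0] at key
  refine key.trans (mul_le_mul_of_nonneg_left ?_ hmin)
  rw [intervalIntegral.integral_of_le hh.le, ← integral_indicator measurableSet_Ioc]
  apply integral_mono_of_nonneg
  · filter_upwards with t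
    exact indicator_nonneg (fun y _ => by positivity) t
  · exact hyi
  filter_upwards [hy] with t ht
  refine (indicator_le_self' (fun _ _ => by positivity) t).trans ?_
  have hder : deriv (fun t => φ (P (y, t))) t = fderiv ℝ φ (P (y, t)) n :=
    (ht.1.hasFDerivAt.comp_hasDerivAt t (hPn t)).deriv
  rw [hder]
  have hle : (fderiv ℝ φ (P (y, t)) n) ^ 2 ≤ ‖gradient φ (P (y, t))‖ ^ 2 := by
    rw [norm_gradient_eq, ← sq_abs]
    apply pow_le_pow_left₀ (abs_nonneg _)
    have := (fderiv ℝ φ (P (y, t))).le_opNorm n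
    rwa [hn, mul_one] at this
  by_cases hw : P (y, t) ∈ ω
  · simp only [hG]
    rw [indicator_of_mem hw]
    linarith
  · simp only [hG]
    rw [indicator_of_notMem hw]
    have hcl : P (y, t) ∉ closure ω := by
      intro hc
      exact ht.2 ⟨hc, by rwa [ho.interior_eq]⟩
    have hev : φ =ᶠ[nhds (P (y, t))] fun _ => 0 := by
      filter_upwards [isClosed_closure.isOpen_compl.mem_nhds hcl] with x hx
      exact h0 x (fun h => hx (subset_closure h))
    rw [hev.fderiv_eq, h0 _ hw]
    simp

lemma cs_bound {X : Type*} [MeasurableSpace X] (ν : Measure X) (f g : X → ℝ)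
    (hf : Integrable (fun x => f x ^ 2) ν) (hg : Integrable (fun x => g x ^ 2) ν)
    (hfg : Integrable (fun x => f x * g x) ν) :
    ∫ x, f x * g x ∂ν ≤ Real.sqrt (∫ x, f x ^ 2 ∂ν) * Real.sqrt (∫ x, g x ^ 2 ∂ν) := by
  have hA : 0 ≤ ∫ x, f x ^ 2 ∂ν := integral_nonneg (fun x => sq_nonneg _)
  have key : ∀ t : ℝ, 0 ≤ (∫ x, f x ^ 2 ∂ν) * (t * t) + (2 * ∫ x, f x * g x ∂ν) * t
      + ∫ x, g x ^ 2 ∂ν := by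
    intro t
    have p : 0 ≤ ∫ x, (t * f x + g x) ^ 2 ∂ν := integral_nonneg (fun x => sq_nonneg _)
    have e : (fun x => (t * f x + g x) ^ 2)
      = fun x => (t * t) * f x ^ 2 + (2 * t) * (f x * g x) + g x ^ 2 := by ext x; ring
    have i1 : Integrable (fun x => (t * t) * f x ^ 2) ν := hf.const_mul _
    have i2 : Integrable (fun x => (2 * t) * (f x * g x)) ν := hfg.const_mul _
    have i3 : Integrable (fun x => (t * t) * f x ^ 2 + (2 * t) * (f x * g x)) ν := i1.add i2
    rw [e, integral_add i3 hg, integral_add i1 i2, integral_const_mul, integral_const_mul] at p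
    linarith
  have hd := discrim_le_zero key
  rw [discrim] at hd
  rw [← Real.sqrt_mul hA]
  apply Real.le_sqrt_of_sq_le
  nlinarith


lemma bump_lip {d : ℕ} (x1 n : Euc d) (hn : ‖n‖ = 1) (s A ρ δ : ℝ) (hs : |s| = 1) (hA : 0 ≤ A)
    (hδ : 0 < δ) (hδρ : δ ≤ ρ) :
    LipschitzWith (Real.toNNReal (2 * A / δ))
      (fun x => s * A * max 0 (1 - ‖x - x1‖ / ρ - |⟪n, x - x1⟫| / δ)) := by
  have hρ : 0 < ρ := by linarith
  apply LipschitzWith.of_dist_le_mul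
  intro x y
  rw [Real.coe_toNNReal _ (by positivity), Real.dist_eq, ← mul_sub, abs_mul, abs_mul, hs, one_mul,
    abs_of_nonneg hA]
  have h1 : |‖x - x1‖ - ‖y - x1‖| ≤ dist x y := by
    have := abs_norm_sub_norm_le (x - x1) (y - x1)
    rwa [sub_sub_sub_cancel_right, ← dist_eq_norm] at this
  have h2 : |(|⟪n, x - x1⟫|) - (|⟪n, y - x1⟫|)| ≤ dist x y := by
    refine (abs_abs_sub_abs_le_abs_sub _ _).trans ?_
    rw [← inner_sub_right, sub_sub_sub_cancel_right]
    refine (abs_real_inner_le_norm _ _).trans ?_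
    rw [hn, one_mul, dist_eq_norm]
  have h3 := abs_max_sub_max_le_abs (1 - ‖x - x1‖ / ρ - |⟪n, x - x1⟫| / δ)
    (1 - ‖y - x1‖ / ρ - |⟪n, y - x1⟫| / δ) 0
  rw [max_comm _ (0:ℝ), max_comm _ (0:ℝ)] at h3
  have h4 : |1 - ‖x - x1‖ / ρ - |⟪n, x - x1⟫| / δ - (1 - ‖y - x1‖ / ρ - |⟪n, y - x1⟫| / δ)|
      ≤ dist x y / ρ + dist x y / δ := by
    have e : 1 - ‖x - x1‖ / ρ - |⟪n, x - x1⟫| / δ - (1 - ‖y - x1‖ / ρ - |⟪n, y - x1⟫| / δ)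
      = -((‖x - x1‖ - ‖y - x1‖) / ρ) - ((|⟪n, x - x1⟫|) - |⟪n, y - x1⟫|) / δ := by ring
    rw [e]
    refine (abs_sub _ _).trans ?_
    rw [abs_neg, abs_div, abs_div, abs_of_pos hρ, abs_of_pos hδ]
    gcongr
  have h5 : dist x y / ρ ≤ dist x y / δ := by gcongr
  calc A * _ ≤ A * (dist x y / δ + dist x y / δ) := by gcongr; linarith
    _ = 2 * A / δ * dist x y := by ring

lemma bump_energy (m : ℕ) (x1 n : Euc (m+1)) (hn : ‖n‖ = 1) (L : Euc m →ₗᵢ[ℝ] Euc (m+1))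
    (hL : ∀ y, ⟪n, L y⟫ = 0)
    (hP : MeasurePreserving (fun p : Euc m × ℝ => L p.1 + p.2 • n))
    (s A ρ δ κ : ℝ) (hs : |s| = 1) (hA : 0 ≤ A) (hκ : 0 < κ)
    (hδ : 0 < δ) (hδρ : δ ≤ ρ) (hδκ : δ ≤ κ⁻¹) (ω : Set (Euc (m+1))) (hω : MeasurableSet ω) :
    energySq κ ω (fun x => s * A * max 0 (1 - ‖x - x1‖ / ρ - |⟪n, x - x1⟫| / δ))
      ≤ 10 * A ^ 2 * (volume.real (ball (0 : Euc m) 1)) * ρ ^ m / δ := by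
  have hρ : 0 < ρ := by linarith
  have hlip := bump_lip x1 n hn s A ρ δ hs hA hδ hδρ
  set φ : Euc (m+1) → ℝ := fun x => s * A * max 0 (1 - ‖x - x1‖ / ρ - |⟪n, x - x1⟫| / δ) with hφ
  set w := volume.real (ball (0 : Euc m) 1)
  set S : Set (Euc (m+1)) := {x | ‖x - x1‖ ≤ ρ ∧ |⟪n, x - x1⟫| ≤ δ} with hS
  have hSc : IsClosed S := by
    have c1 : IsClosed {x : Euc (m+1) | ‖x - x1‖ ≤ ρ} := isClosed_le (by fun_prop) (by fun_prop)
    have c2 : IsClosed {x : Euc (m+1) | |⟪n, x - x1⟫| ≤ δ} := isClosed_le (by fun_prop) (by fun_prop)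
    exact c1.inter c2
  have hout : ∀ x ∉ S, φ x = 0 := by
    intro x hx
    simp only [hφ]
    rw [max_eq_left, mul_zero]
    by_contra hcon
    push Not at hcon
    apply hx
    have a1 : 0 ≤ ‖x - x1‖ / ρ := by positivity
    have a2 : 0 ≤ |⟪n, x - x1⟫| / δ := by positivity
    constructor
    · rw [← div_le_one hρ]; linarith
    · rw [← div_le_one hδ]; linarith
  have hvol : volume S ≤ ENNReal.ofReal (2 * δ * w * ρ ^ m) := by
    have hP' : MeasurePreserving (fun p : Euc m × ℝ => x1 + (L p.1 + p.2 • n)) :=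
      (measurePreserving_add_left volume x1).comp hP
    rw [← hP'.measure_preimage hSc.measurableSet.nullMeasurableSet]
    have hsub : (fun p : Euc m × ℝ => x1 + (L p.1 + p.2 • n)) ⁻¹' S
        ⊆ closedBall 0 ρ ×ˢ Icc (-δ) δ := by
      rintro ⟨y, t⟩ ⟨h1, h2⟩
      simp only [add_sub_cancel_left] at h1 h2
      rw [inner_add_right, hL, real_inner_smul_right, real_inner_self_eq_norm_sq, hn] at h2
      have h3 := norm_add_sq_real (L y) (t • n)
      rw [real_inner_smul_right, real_inner_comm, hL, L.norm_map] at h3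
      refine ⟨?_, ?_⟩
      · rw [mem_closedBall_zero_iff]
        refine le_trans ?_ h1
        apply le_of_sq_le_sq _ (norm_nonneg _)
        rw [h3]
        nlinarith [sq_nonneg ‖t • n‖]
      · rw [mem_Icc, ← abs_le]
        simpa using h2
    refine (measure_mono hsub).trans ?_
    rw [Measure.volume_eq_prod, Measure.prod_prod, Measure.addHaar_closedBall _ _ hρ.le,
      Real.volume_Icc]
    have hw : volume (ball (0 : Euc m) 1) = ENNReal.ofReal w :=
      (ofReal_measureReal measure_ball_lt_top.ne).symm
    rw [hw, ← ENNReal.ofReal_mul (by positivity), ← ENNReal.ofReal_mul (by positivity)]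
    apply ENNReal.ofReal_le_ofReal
    simp only [finrank_euclideanSpace, Fintype.card_fin]
    apply le_of_eq; ring
  have hvfin : volume S ≠ ∞ := (hvol.trans_lt ENNReal.ofReal_lt_top).ne
  have hvr : volume.real S ≤ 2 * δ * w * ρ ^ m :=
    ENNReal.toReal_le_of_le_ofReal (by positivity) hvol
  have hbound : ∀ (f : Euc (m+1) → ℝ) (C : ℝ), 0 ≤ C → (∀ x, 0 ≤ f x) → (∀ x ∈ S, f x ≤ C) →
      (∀ x ∉ S, f x = 0) → ∫ x in ω, f x ≤ C * (2 * δ * w * ρ ^ m) := by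
    intro f C hC hf0 hfS hfo
    have e : ∫ x, S.indicator (fun _ => C) x = C * volume.real S := by
      rw [integral_indicator hSc.measurableSet]; simp [mul_comm]
    rw [← integral_indicator hω]
    calc ∫ x, ω.indicator f x ≤ ∫ x, S.indicator (fun _ => C) x := by
          apply integral_mono_of_nonneg
          · filter_upwards with x
            exact indicator_nonneg (fun x _ => hf0 x) x
          · exact (integrable_indicator_iff hSc.measurableSet).2 (integrableOn_const hvfin)
          · filter_upwards with x
            refine (indicator_le_self' (fun _ _ => hf0 _) x).trans ?_
            by_cases hx : x ∈ S
            · rw [indicator_of_mem hx]; exact hfS x hx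
            · rw [indicator_of_notMem hx, hfo x hx]
      _ = C * volume.real S := e
      _ ≤ _ := by gcongr
  have g1 : gradSq ω φ ≤ (2 * A / δ) ^ 2 * (2 * δ * w * ρ ^ m) := by
    apply hbound _ _ (by positivity) (fun x => by positivity)
    · intro x _
      rw [norm_gradient_eq]
      have := norm_fderiv_le_of_lipschitz ℝ hlip (x₀ := x)
      rw [Real.coe_toNNReal _ (by positivity)] at this
      gcongr
    · intro x hx
      have hev : φ =ᶠ[nhds x] fun _ => 0 := by
        filter_upwards [hSc.isOpen_compl.mem_nhds hx] with y hy
        exact hout y hy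
      rw [norm_gradient_eq, hev.fderiv_eq]
      simp
  have g2 : sqIntg ω φ ≤ A ^ 2 * (2 * δ * w * ρ ^ m) := by
    apply hbound _ _ (by positivity) (fun x => by positivity)
    · intro x _
      rw [← sq_abs]
      apply pow_le_pow_left₀ (abs_nonneg _)
      simp only [hφ]
      rw [abs_mul, abs_mul, hs, one_mul, abs_of_nonneg hA, abs_of_nonneg (le_max_left _ _)]
      have a1 : 0 ≤ ‖x - x1‖ / ρ := by positivity
      have a2 : 0 ≤ |⟪n, x - x1⟫| / δ := by positivity
      have : max 0 (1 - ‖x - x1‖ / ρ - |⟪n, x - x1⟫| / δ) ≤ 1 := max_le (by norm_num) (by linarith)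
      nlinarith
    · intro x hx
      rw [hout x hx]; simp
  have hκδ : κ ^ 2 ≤ 1 / δ ^ 2 := by
    have : κ ≤ 1 / δ := by rw [le_div_iff₀ hδ]; rw [le_inv_comm₀ hδ hκ, ← one_div, le_div_iff₀ hδ] at hδκ; linarith
    calc κ ^ 2 ≤ (1 / δ) ^ 2 := by gcongr
      _ = _ := by rw [div_pow, one_pow]
  have hwn : 0 ≤ w := measureReal_nonneg
  have hsq : 0 ≤ sqIntg ω φ := integral_nonneg (fun x => sq_nonneg _)
  unfold energySq
  calc gradSq ω φ + κ ^ 2 * sqIntg ω φ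
      ≤ (2 * A / δ) ^ 2 * (2 * δ * w * ρ ^ m) + (1 / δ ^ 2) * (A ^ 2 * (2 * δ * w * ρ ^ m)) := by
        gcongr
    _ = _ := by field_simp; ring


lemma lower_bound (m : ℕ) (α : ℝ≥0) (hα0 : 0 < α)
    (hα : (μH[(m:ℝ)] : Measure (Euc m)) = α • volume) (q : ℝ) (hq : 0 < q) (hq1 : q ≤ 1)
    (κ : ℝ) (hκ : 0 < κ) (T₁ T₂ : Set (Euc (m+1))) (hT₁ : Convex ℝ T₁) (hT₂ : Convex ℝ T₂)
    (hTc₁ : IsCompact T₁) (hTc₂ : IsCompact T₂) (h : ℝ) (hh : 0 < h) (hdiam : Metric.diam T₁ ≤ h)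
    (x0 n : Euc (m+1)) (hn : ‖n‖ = 1) (hx0 : x0 ∈ T₁ ∩ T₂)
    (hFn : ∀ x ∈ T₁ ∩ T₂, ⟪n, x - x0⟫ = 0)
    (hFb : ∀ x ∈ ball x0 (q * h), ⟪n, x - x0⟫ = 0 → x ∈ T₁ ∩ T₂)
    (hball : ball x0 (q * h) ⊆ T₁ ∪ T₂) (j : Euc (m+1) →ᵃ[ℝ] ℝ) :
    ∃ φ, IsTest (interior (T₁ ∪ T₂)) φ ∧ energySq κ (interior (T₁ ∪ T₂)) φ ≤ 1 ∧
      Real.sqrt (α * (q / 4) ^ (m + 1) / (160 * 4 ^ m)) * Real.sqrt (min h κ⁻¹)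
        * Real.sqrt (∫ x in T₁ ∩ T₂, (j x) ^ 2 ∂(μH[(m:ℝ)]))
        ≤ ∫ x in T₁ ∩ T₂, j x * φ x ∂(μH[(m:ℝ)]) := by
  obtain ⟨L, hL, hsurj, hP, hPe⟩ := exists_param m n hn
  have hFc : IsCompact (T₁ ∩ T₂) := hTc₁.inter hTc₂
  have hFconv : Convex ℝ (T₁ ∩ T₂) := hT₁.inter hT₂
  have hFm : MeasurableSet (T₁ ∩ T₂) := hFc.isClosed.measurableSet
  have hjc : Continuous j := j.continuous_of_finiteDimensional
  obtain ⟨v, hv, hvmax⟩ := hFc.exists_isMaxOn ⟨x0, hx0⟩ (f := fun x => |j x|) (by fun_prop)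
  have hvmax' : ∀ x ∈ T₁ ∩ T₂, |j x| ≤ |j v| := fun x hx => hvmax hx
  obtain ⟨s, hs, hsv⟩ : ∃ s : ℝ, |s| = 1 ∧ s * j v = |j v| := by
    rcases le_total 0 (j v) with h | h
    · exact ⟨1, by simp, by rw [abs_of_nonneg h, one_mul]⟩
    · exact ⟨-1, by simp, by rw [abs_of_nonpos h]; ring⟩
  have hss : s * s = 1 := by rw [← abs_mul_abs_self, hs, one_mul]
  set M := |j v| with hM
  have hM0 : 0 ≤ M := abs_nonneg _
  set x1 := AffineMap.lineMap v x0 (1/4 : ℝ) with hx1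
  set ρ := q / 4 * h with hρd
  have hρ : 0 < ρ := by positivity
  have hquarter : (1/4 : ℝ) ∈ Icc (0:ℝ) 1 := by constructor <;> norm_num
  -- the rescaled point
  have hresc : ∀ x ∈ ball x1 ρ, ∃ x' ∈ ball x0 (q * h), x = AffineMap.lineMap v x' (1/4 : ℝ) ∧
      x' - x0 = (4:ℝ) • (x - x1) := by
    intro x hx
    have e : (v + (4:ℝ) • (x - v)) - x0 = (4:ℝ) • (x - x1) := by
      rw [hx1, AffineMap.lineMap_apply_module]
      module
    refine ⟨v + (4:ℝ) • (x - v), ?_, ?_, e⟩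
    · rw [mem_ball, dist_eq_norm, e, norm_smul, Real.norm_of_nonneg (by norm_num)]
      rw [mem_ball, dist_eq_norm] at hx
      rw [hρd] at hx
      linarith
    · rw [AffineMap.lineMap_apply_module]
      module
  have hb1 : ball x1 ρ ⊆ T₁ ∪ T₂ := by
    intro x hx
    obtain ⟨x', hx', rfl, -⟩ := hresc x hx
    rcases hball hx' with h | h
    · exact Or.inl (hT₁.lineMap_mem hv.1 h hquarter)
    · exact Or.inr (hT₂.lineMap_mem hv.2 h hquarter)
  have hb2 : ∀ x ∈ ball x1 ρ, ⟪n, x - x1⟫ = 0 → x ∈ T₁ ∩ T₂ ∧ M / 2 ≤ s * j x := by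
    intro x hx hxn
    obtain ⟨x', hx', hxe, hd⟩ := hresc x hx
    have hF' : x' ∈ T₁ ∩ T₂ := hFb x' hx' (by rw [hd, real_inner_smul_right, hxn, mul_zero])
    refine ⟨by rw [hxe]; exact hFconv.lineMap_mem hv hF' hquarter, ?_⟩
    have e : j x = 3 / 4 * j v + 1 / 4 * j x' := by
      rw [hxe, AffineMap.apply_lineMap, AffineMap.lineMap_apply_module]
      simp only [smul_eq_mul]; ring
    have hle : |s * j x'| ≤ M := by rw [abs_mul, hs, one_mul]; exact hvmax' x' hF'
    have hle' := (abs_le.1 hle).1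
    have : s * j x = 3 / 4 * (s * j v) + 1 / 4 * (s * j x') := by rw [e]; ring
    rw [this, hsv]; linarith
  have hx1F : x1 ∈ T₁ ∩ T₂ := (hb2 x1 (mem_ball_self hρ) (by simp)).1
  have hFn1 : ∀ x ∈ T₁ ∩ T₂, ⟪n, x - x1⟫ = 0 := by
    intro x hx
    have h1 := hFn x hx
    have h2 := hFn x1 hx1F
    have : x - x1 = (x - x0) - (x1 - x0) := by abel
    rw [this, inner_sub_right, h1, h2, sub_zero]
  set δ := min ρ κ⁻¹ with hδd
  have hδ : 0 < δ := lt_min hρ (by positivity)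
  set w := volume.real (ball (0 : Euc m) 1) with hw
  have hw0 : 0 < w := ENNReal.toReal_pos (measure_ball_pos _ _ one_pos).ne' measure_ball_lt_top.ne
  have hα0' : (0:ℝ) < α := hα0
  set A := Real.sqrt (δ / (10 * w * ρ ^ m)) with hA
  have hA2 : A ^ 2 = δ / (10 * w * ρ ^ m) := Real.sq_sqrt (by positivity)
  have hA0 : 0 ≤ A := Real.sqrt_nonneg _
  have hlip := bump_lip x1 n hn s A ρ δ hs hA0 hδ (min_le_left _ _)
  have hen := bump_energy m x1 n hn L hL hP s A ρ δ κ hs hA0 hκ hδ (min_le_left _ _)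
    (min_le_right _ _) (interior (T₁ ∪ T₂)) isOpen_interior.measurableSet
  set φ : Euc (m+1) → ℝ := fun x => s * A * max 0 (1 - ‖x - x1‖ / ρ - |⟪n, x - x1⟫| / δ) with hφ
  have hφ0 : ∀ x ∉ ball x1 ρ, φ x = 0 := by
    intro x hx
    simp only [hφ]
    rw [max_eq_left, mul_zero]
    rw [mem_ball, dist_eq_norm, not_lt, ← one_le_div hρ] at hx
    have a2 : 0 ≤ |⟪n, x - x1⟫| / δ := by positivity
    linarith
  refine ⟨φ, ⟨⟨_, hlip⟩, ?_⟩, ?_, ?_⟩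
  · intro x hx
    apply hφ0
    intro hxb
    exact hx (interior_maximal hb1 isOpen_ball hxb)
  · refine hen.trans (le_of_eq ?_)
    rw [hA2, ← hw]
    field_simp
  -- pairing
  have hfi := fun f => face_integral m α hα n x1 L hsurj (T₁ ∩ T₂) hFm hFn1 f
  rw [hfi, hfi]
  set F' : Set (Euc m) := {y | x1 + L y ∈ T₁ ∩ T₂} with hF'
  have hcl : Topology.IsClosedEmbedding (fun y => x1 + L y) :=
    ((IsometryEquiv.addLeft x1).isometry.comp L.isometry).isClosedEmbedding
  have hF'c : IsCompact F' := hcl.isCompact_preimage hFc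
  have hφc : Continuous φ := hlip.continuous
  have hφF : ∀ x ∈ T₁ ∩ T₂, 0 ≤ j x * φ x := by
    intro x hx
    by_cases hxb : x ∈ ball x1 ρ
    · have h1 := (hb2 x hxb (hFn1 x hx)).2
      have e : j x * φ x = (s * j x) * (A * max 0 (1 - ‖x - x1‖ / ρ - |⟪n, x - x1⟫| / δ)) := by
        simp only [hφ]; ring
      rw [e]
      apply mul_nonneg (by linarith) (mul_nonneg hA0 (le_max_left _ _))
    · rw [hφ0 x hxb, mul_zero]
  have hsubn : ∀ y, x1 + L y - x1 = L y := fun y => by abel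
  have hbF : ball (0 : Euc m) (ρ / 2) ⊆ F' := by
    intro y hy
    rw [mem_ball_zero_iff] at hy
    refine (hb2 (x1 + L y) ?_ ?_).1
    · rw [mem_ball, dist_eq_norm, hsubn, L.norm_map]; linarith
    · rw [hsubn, hL]
  have hpt : ∀ y ∈ ball (0 : Euc m) (ρ / 2), M * A / 4 ≤ j (x1 + L y) * φ (x1 + L y) := by
    intro y hy
    rw [mem_ball_zero_iff] at hy
    have h1 := (hb2 (x1 + L y) (by
      rw [mem_ball, dist_eq_norm, hsubn, L.norm_map]; linarith) (by rw [hsubn, hL])).2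
    have e : j (x1 + L y) * φ (x1 + L y) = (s * j (x1 + L y)) * (A * max 0 (1 - ‖y‖ / ρ)) := by
      simp only [hφ]; rw [hsubn, hL, L.norm_map, abs_zero, zero_div, sub_zero]; ring
    have h2 : 1 / 2 ≤ max 0 (1 - ‖y‖ / ρ) := by
      apply le_max_of_le_right
      have : ‖y‖ / ρ ≤ 1 / 2 := by rw [div_le_iff₀ hρ]; linarith
      linarith
    rw [e]
    calc M * A / 4 = (M / 2) * (A * (1 / 2)) := by ring
      _ ≤ _ := by gcongr; linarith
  have hint : IntegrableOn (fun y => j (x1 + L y) * φ (x1 + L y)) F' := by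
    apply ContinuousOn.integrableOn_compact hF'c
    have hLc : Continuous L := L.continuous
    exact Continuous.continuousOn (by fun_prop)
  have hpair : M * A / 4 * (w * (ρ / 2) ^ m) ≤ ∫ y in F', j (x1 + L y) * φ (x1 + L y) := by
    have hv : volume.real (ball (0 : Euc m) (ρ / 2)) = w * (ρ / 2) ^ m := by
      rw [Measure.real, Measure.addHaar_ball_of_pos _ _ (by positivity), ENNReal.toReal_mul,
        ENNReal.toReal_ofReal (by positivity)]
      simp only [finrank_euclideanSpace, Fintype.card_fin]
      rw [mul_comm]; rfl
    calc M * A / 4 * (w * (ρ / 2) ^ m) = ∫ y in ball (0 : Euc m) (ρ / 2), M * A / 4 := by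
          rw [setIntegral_const, hv, smul_eq_mul, mul_comm]
      _ ≤ ∫ y in ball (0 : Euc m) (ρ / 2), j (x1 + L y) * φ (x1 + L y) := by
          apply setIntegral_mono_on (integrableOn_const measure_ball_lt_top.ne)
            (hint.mono_set hbF) measurableSet_ball hpt
      _ ≤ _ := by
          apply setIntegral_mono_set hint _ hbF.eventuallyLE
          filter_upwards [ae_restrict_mem hF'c.measurableSet] with y hy
          exact hφF _ hy
  have hj2 : ∫ y in F', j (x1 + L y) ^ 2 ≤ M ^ 2 * (w * h ^ m) := by
    have hsub : F' ⊆ closedBall 0 h := by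
      intro y hy
      rw [mem_closedBall_zero_iff]
      have := Metric.dist_le_diam_of_mem hTc₁.isBounded hy.1 hx1F.1
      rw [dist_eq_norm, hsubn, L.norm_map] at this
      exact this.trans hdiam
    have hvF : volume.real F' ≤ w * h ^ m := by
      have h1 : volume.real F' ≤ volume.real (closedBall (0 : Euc m) h) :=
        measureReal_mono hsub measure_closedBall_lt_top.ne
      refine h1.trans (le_of_eq ?_)
      rw [Measure.real, Measure.addHaar_closedBall _ _ hh.le, ENNReal.toReal_mul,
        ENNReal.toReal_ofReal (by positivity)]
      simp only [finrank_euclideanSpace, Fintype.card_fin]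
      rw [mul_comm]; rfl
    calc ∫ y in F', j (x1 + L y) ^ 2 ≤ ∫ y in F', M ^ 2 := by
          have hLc : Continuous L := L.continuous
          apply setIntegral_mono_on _ (integrableOn_const hF'c.measure_lt_top.ne) hF'c.measurableSet
          · intro y hy
            rw [← sq_abs]
            exact pow_le_pow_left₀ (abs_nonneg _) (hvmax' _ hy) 2
          · exact ContinuousOn.integrableOn_compact hF'c (Continuous.continuousOn (by fun_prop))
      _ = M ^ 2 * volume.real F' := by rw [setIntegral_const, smul_eq_mul, mul_comm]
      _ ≤ _ := by gcongr
  have hℓ : q / 4 * min h κ⁻¹ ≤ δ := by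
    have hk : 0 < κ⁻¹ := by positivity
    apply le_min
    · rw [hρd]; gcongr; exact min_le_left _ _
    · calc q / 4 * min h κ⁻¹ ≤ 1 * κ⁻¹ := by
            gcongr
            · linarith
            · exact min_le_right _ _
        _ = κ⁻¹ := one_mul _
  set ℓ := min h κ⁻¹ with hℓd
  have hℓ0 : 0 ≤ ℓ := le_min hh.le (by positivity)
  refine le_trans ?_ (mul_le_mul_of_nonneg_left hpair hα0'.le)
  set J := ∫ y in F', j (x1 + L y) ^ 2 with hJ
  have hJ0 : 0 ≤ J := integral_nonneg (fun y => sq_nonneg _)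
  rw [← Real.sqrt_mul (by positivity), ← Real.sqrt_mul (by positivity)]
  apply Real.sqrt_le_iff.2 ⟨by positivity, ?_⟩
  calc α * (q / 4) ^ (m + 1) / (160 * 4 ^ m) * ℓ * (α * J)
      ≤ α * (q / 4) ^ (m + 1) / (160 * 4 ^ m) * ℓ * (α * (M ^ 2 * (w * h ^ m))) := by gcongr
    _ = (q / 4 * ℓ) * (α ^ 2 * M ^ 2 * w * ρ ^ m / (160 * 4 ^ m)) := by
        rw [hρd, mul_pow]; ring
    _ ≤ δ * (α ^ 2 * M ^ 2 * w * ρ ^ m / (160 * 4 ^ m)) := by gcongr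
    _ = (α * (M * A / 4 * (w * (ρ / 2) ^ m))) ^ 2 := by
        have : (α * (M * A / 4 * (w * (ρ / 2) ^ m))) ^ 2
          = α ^ 2 * M ^ 2 * A ^ 2 / 16 * w ^ 2 * ((ρ / 2) ^ m) ^ 2 := by ring
        rw [this, hA2, div_pow]
        have h4 : (4:ℝ) ^ m = (2 ^ m) ^ 2 := by rw [← pow_mul, mul_comm, pow_mul]; norm_num
        rw [h4]
        field_simp
        ring

lemma upper_bound (m : ℕ) (α : ℝ≥0)
    (hα : (μH[(m:ℝ)] : Measure (Euc m)) = α • volume)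
    (κ : ℝ) (hκ : 0 < κ) (T₁ T₂ : Set (Euc (m+1))) (hT₁ : Convex ℝ T₁) (hT₂ : Convex ℝ T₂)
    (hTc₁ : IsCompact T₁) (hTc₂ : IsCompact T₂) (h : ℝ) (hh : 0 < h) (hdiam₁ : Metric.diam T₁ ≤ h)
    (hdiam₂ : Metric.diam T₂ ≤ h)
    (x0 n : Euc (m+1)) (hn : ‖n‖ = 1)
    (hFn : ∀ x ∈ T₁ ∩ T₂, ⟪n, x - x0⟫ = 0) (j : Euc (m+1) →ᵃ[ℝ] ℝ)
    (φ : Euc (m+1) → ℝ) (hφ : IsTest (interior (T₁ ∪ T₂)) φ)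
    (hE : energySq κ (interior (T₁ ∪ T₂)) φ ≤ 1) :
    ∫ x in T₁ ∩ T₂, j x * φ x ∂(μH[(m:ℝ)]) ≤
      Real.sqrt α * Real.sqrt (min h κ⁻¹)
        * Real.sqrt (∫ x in T₁ ∩ T₂, (j x) ^ 2 ∂(μH[(m:ℝ)])) := by
  obtain ⟨L, hL, hsurj, hP, hPe⟩ := exists_param m n hn
  have hFc : IsCompact (T₁ ∩ T₂) := hTc₁.inter hTc₂
  have hFm := hFc.measurableSet
  rw [face_integral m α hα n x0 L hsurj _ hFm hFn, face_integral m α hα n x0 L hsurj _ hFm hFn]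
  have hiso : Isometry (fun y => x0 + L y) := (IsometryEquiv.addLeft x0).isometry.comp L.isometry
  have hF' : IsCompact {y | x0 + L y ∈ T₁ ∩ T₂} := hiso.isClosedEmbedding.isCompact_preimage hFc
  have hjc : Continuous (fun y => j (x0 + L y)) :=
    (AffineMap.continuous_of_finiteDimensional j).comp hiso.continuous
  obtain ⟨K, hK⟩ := hφ.1
  have hφc : Continuous (fun y => φ (x0 + L y)) := hK.continuous.comp hiso.continuous
  have hcs := cs_bound (volume.restrict {y | x0 + L y ∈ T₁ ∩ T₂})
    (fun y => j (x0 + L y)) (fun y => φ (x0 + L y))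
    ((hjc.pow 2).continuousOn.integrableOn_compact hF')
    ((hφc.pow 2).continuousOn.integrableOn_compact hF')
    ((hjc.mul hφc).continuousOn.integrableOn_compact hF')
  have hUc : IsCompact (T₁ ∪ T₂) := hTc₁.union hTc₂
  have hfr : volume (frontier (interior (T₁ ∪ T₂))) = 0 := by
    refine measure_mono_null (t := frontier T₁ ∪ frontier T₂) ?_ ?_
    · refine frontier_interior_subset.trans ((frontier_union_subset _ _).trans ?_)
      exact union_subset_union inter_subset_left inter_subset_right
    · exact measure_union_null (hT₁.addHaar_frontier volume) (hT₂.addHaar_frontier volume)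
  have hFh : ∀ x ∈ T₁ ∩ T₂, x + h • n ∉ interior (T₁ ∪ T₂) := by
    intro x hx hm
    obtain ⟨ε, hε, hb⟩ := Metric.isOpen_iff.1 isOpen_interior _ hm
    have h1 : x + (h + ε / 2) • n ∈ T₁ ∪ T₂ := by
      apply interior_subset
      apply hb
      rw [mem_ball, dist_eq_norm]
      have : x + (h + ε / 2) • n - (x + h • n) = (ε / 2) • n := by module
      rw [this, norm_smul, hn, Real.norm_eq_abs, abs_of_pos (by positivity)]
      linarith
    have h2 : dist (x + (h + ε / 2) • n) x = h + ε / 2 := by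
      rw [dist_eq_norm, add_sub_cancel_left, norm_smul, hn, Real.norm_eq_abs,
        abs_of_pos (by positivity), mul_one]
    rcases h1 with h1 | h1
    · have := Metric.dist_le_diam_of_mem hTc₁.isBounded h1 hx.1
      linarith
    · have := Metric.dist_le_diam_of_mem hTc₂.isBounded h1 hx.2
      linarith
  have htr := trace_bound m κ hκ n x0 hn L hP hPe _ _ isOpen_interior
    (hUc.isBounded.subset interior_subset) hfr hFm h hh hFh φ hφ
  have hl : 0 ≤ min h κ⁻¹ := by positivity
  have htr2 := htr.trans (mul_le_of_le_one_right hl hE)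
  have hs := Real.sqrt_le_sqrt htr2
  have hαn : (0:ℝ) ≤ α := α.2
  rw [Real.sqrt_mul hαn]
  calc (α:ℝ) * ∫ y in {y | x0 + L y ∈ T₁ ∩ T₂}, j (x0 + L y) * φ (x0 + L y)
      ≤ α * (Real.sqrt (∫ y in {y | x0 + L y ∈ T₁ ∩ T₂}, j (x0 + L y) ^ 2)
          * Real.sqrt (min h κ⁻¹)) := by
        refine mul_le_mul_of_nonneg_left (hcs.trans ?_) hαn
        exact mul_le_mul_of_nonneg_left hs (Real.sqrt_nonneg _)
    _ = _ := by
        nth_rewrite 1 [← Real.mul_self_sqrt hαn]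
        ring


/-- two-sided robust bound for the face residual. For two simplices
`T₁, T₂` with disjoint interiors sharing the common face `F = T₁ ∩ T₂`, each with shape
parameter `≤ μ`, and every affine `j`, the dual energy norm over the patch
`ω_F = int (T₁ ∪ T₂)` of `φ ↦ ∫_F j φ dH^{d−1}` is equivalent to
`min{h, κ⁻¹}^{1/2} ‖j‖_{L²(F)}`, with constants depending only on `d` and `μ`. -/
theorem face_residual_two_sided (d : ℕ) (hd : 2 ≤ d) (μ : ℝ) :
    ∃ c C : ℝ, 0 < c ∧ 0 < C ∧ ∀ κ : ℝ, 0 < κ →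
      ∀ B₁ B₂ : AffineBasis (Fin (d + 1)) ℝ (Euc d),
        interior (simT B₁) ∩ interior (simT B₂) = ∅ →
        Metric.diam (simT B₁) ≤ μ * inradius (simT B₁) →
        Metric.diam (simT B₂) ≤ μ * inradius (simT B₂) →
        ∀ z₁ z₂ : Fin (d + 1),
          simT B₁ ∩ simT B₂ = simFace B₁ z₁ →
          simT B₁ ∩ simT B₂ = simFace B₂ z₂ →
          ∀ j : Euc d →ᵃ[ℝ] ℝ,
            ENNReal.ofReal (c
                * Real.sqrt (min (max (Metric.diam (simT B₁)) (Metric.diam (simT B₂))) κ⁻¹)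
                * Real.sqrt (∫ x in simT B₁ ∩ simT B₂, (j x) ^ 2 ∂(μH[(d : ℝ) - 1])))
              ≤ dualNorm κ (interior (simT B₁ ∪ simT B₂))
                  (fun φ => ∫ x in simT B₁ ∩ simT B₂, j x * φ x ∂(μH[(d : ℝ) - 1])) ∧
            dualNorm κ (interior (simT B₁ ∪ simT B₂))
                (fun φ => ∫ x in simT B₁ ∩ simT B₂, j x * φ x ∂(μH[(d : ℝ) - 1]))
              ≤ ENNReal.ofReal (C
                  * Real.sqrt (min (max (Metric.diam (simT B₁)) (Metric.diam (simT B₂))) κ⁻¹)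
                  * Real.sqrt (∫ x in simT B₁ ∩ simT B₂, (j x) ^ 2 ∂(μH[(d : ℝ) - 1]))) := by
  obtain ⟨m, rfl⟩ : ∃ m, d = m + 1 := ⟨d - 1, by omega⟩
  have hexp : (((m + 1 : ℕ) : ℝ) - 1) = (m : ℝ) := by push_cast; ring
  rw [hexp]
  obtain ⟨α, hα0, hα⟩ := exists_alpha m
  obtain ⟨q, hq, hq1, hgeom⟩ := geom (m + 1) hd μ
  have hα0' : (0:ℝ) < α := hα0
  refine ⟨Real.sqrt (α * (q / 4) ^ (m + 1) / (160 * 4 ^ m)), Real.sqrt α,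
    Real.sqrt_pos.2 (by positivity), Real.sqrt_pos.2 hα0', ?_⟩
  intro κ hκ B₁ B₂ hint hs₁ hs₂ z₁ z₂ hz₁ hz₂ j
  obtain ⟨x0, n, hn, hx0, hFn, hFb, hball⟩ := hgeom B₁ B₂ hint hs₁ hs₂ z₁ z₂ hz₁ hz₂
  have hh : 0 < max (Metric.diam (simT B₁)) (Metric.diam (simT B₂)) :=
    lt_max_of_lt_left (diam_pos_simT (by omega) B₁)
  constructor
  · obtain ⟨φ, hφ, hE, hle⟩ := lower_bound m α hα0 hα q hq hq1 κ hκ (simT B₁) (simT B₂)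
      (convex_convexHull ℝ _) (convex_convexHull ℝ _) (simT_compact B₁) (simT_compact B₂) _ hh
      (le_max_left _ _) x0 n hn hx0 hFn hFb hball j
    exact le_iSup₂_of_le φ ⟨hφ, hE⟩ (ENNReal.ofReal_le_ofReal hle)
  · refine iSup₂_le ?_
    rintro φ ⟨hφ, hE⟩
    exact ENNReal.ofReal_le_ofReal (upper_bound m α hα κ hκ (simT B₁) (simT B₂)
      (convex_convexHull ℝ _) (convex_convexHull ℝ _) (simT_compact B₁) (simT_compact B₂) _ hh
      (le_max_left _ _) (le_max_right _ _) x0 n hn hFn j φ hφ hE)
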